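/- Let n, r, p be positive integers, let A_1, …, A_r ∈ M_n(ℂ) be linearly independent matrices satisfying Σ_{k=1}^{r} A_kᴴ A_k = 1_n, define Φ(X) = Σ_{k=1}^{r} A_k X A_kᴴ, and define Ψ : M_n(ℂ) → M_r(ℂ) by Ψ(X)_{j,k} = Tr(A_j X A_kᴴ). Let m_1, …, m_p and n_1, …, n_p be positive integers with m_ℓ ≥ n_ℓ for each ℓ, set N = m_1 n_1 + ⋯ + m_p n_p, and index ℂ^N by triples (ℓ, a, b) with ℓ ∈ {1,…,p}, a ∈ {1,…,m_ℓ}, b ∈ {1,…,n_ℓ}. Suppose V ∈ M_{N,r}(ℂ) satisfies VᴴV = 1_r and suppose that for every X ∈ M_n(ℂ) the matrix V Ψ(X) Vᴴ has block form ⊕_{ℓ=1}^{p} (1_{m_ℓ} ⊗ Y_ℓ(X)) for some Y_ℓ(X) ∈ M_{n_ℓ}(ℂ); that is, (V Ψ(X) Vᴴ)((ℓ,a,b),(ℓ',a',b')) = 0 unless ℓ = ℓ' and a = a', and its value when ℓ = ℓ' and a = a' does not depend on a. Then there exist unitary matrices U_1, …, U_N ∈ M_n(ℂ) and nonnegative reals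 p_1, …, p_N with Σ_i p_i = 1 such that Φ(X) = Σ_{i=1}^{N} p_i U_i X U_iᴴ for every X ∈ M_n(ℂ). -/

import Mathlib

open Matrix BigOperators
open scoped Kronecker

/-!
Put `B = krausMix V A`; these are again Kraus operators of `Φ`, and the complementary channel of `B`
is `X ↦ V Ψ(X) Vᴴ`. Since `V Ψ(X) Vᴴ` has entries `tr ((B j)ᴴ * B i * X)`, letting `X` vary turns
the block form of the complementary channel into the block form `⊕ 1 ⊗ C ℓ` of the Gram matrix
`((B j)ᴴ * B k)`. A mixture `U = ∑ w j • B j` then has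
`Uᴴ * U = ∑ ℓ, ∑ b b', ((w ℓ)ᴴ * w ℓ) b b' • C ℓ b b'`, where `w ℓ` is the part of `w` in block `ℓ`
seen as an `m ℓ × n ℓ` matrix. If `(w ℓ)ᴴ * w ℓ = m ℓ • 1` for every `ℓ`, this is the trace of the
Gram matrix, `∑ (B j)ᴴ * B j = 1`, so `U` is unitary.

It remains to find an `N × N` matrix `W` with `Wᴴ * W = N • 1`, all of whose rows `w` are of this
kind; this requires `n ℓ ≤ m ℓ`. Order the triples lexicographically. Within block `ℓ` the
position is `f a + g b`, so the rows of the Fourier matrix of `ℤ/N` restrict to rank-one matrices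
with unimodular entries, and multiplying the column `(ℓ, a, b)` by the `(a, b)` entry of the Fourier
matrix of `ℤ/m ℓ` makes their columns orthogonal without affecting `Wᴴ * W = N • 1`.
-/

section Kraus

variable {R d e ι κ : Type*} [CommSemiring R] [StarRing R] [Fintype κ]

/-- The operators `∑ k, W i k • A k` obtained by mixing the family `A` with the coefficients `W`. -/
def krausMix (W : Matrix ι κ R) (A : κ → Matrix d e R) (i : ι) : Matrix d e R :=
  ∑ k, W i k • A k

/-- The completely positive map `X ↦ ∑ k, A k * X * (A k)ᴴ` with Kraus operators `A`. -/
def krausMap [Fintype e] (A : κ → Matrix d e R) (X : Matrix e e R) : Matrix d d R :=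
  ∑ k, A k * X * (A k)ᴴ

/-- The complementary map `X ↦ (tr (A j * X * (A k)ᴴ))_{j,k}` of `krausMap A`. -/
def complementaryMap [Fintype d] [Fintype e] (A : ι → Matrix d e R) (X : Matrix e e R) :
    Matrix ι ι R :=
  of fun j k => trace (A j * X * (A k)ᴴ)

/-- The operator-valued Gram matrix `((A j)ᴴ * A k)_{j,k}` of a family of Kraus operators. -/
def krausGram [Fintype d] (A : ι → Matrix d e R) : Matrix ι ι (Matrix e e R) :=
  of fun j k => (A j)ᴴ * A k

lemma complementaryMap_apply_eq_trace_krausGram_mul [Fintype d] [Fintype e]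
    (A : ι → Matrix d e R) (X : Matrix e e R) (j k : ι) :
    complementaryMap A X j k = trace (krausGram A k j * X) :=
  trace_mul_cycle ..

lemma krausGram_apply_eq_apply [Fintype d] [Fintype e] {A : ι → Matrix d e R} {j k j' k' : ι}
    (h : ∀ X, complementaryMap A X j k = complementaryMap A X j' k') :
    krausGram A k j = krausGram A k' j' :=
  ext_iff_trace_mul_right.2 <| by
    simpa only [complementaryMap_apply_eq_trace_krausGram_mul] using h

lemma krausGram_apply_eq_zero [Fintype d] [Fintype e] {A : ι → Matrix d e R} {j k : ι}
    (h : ∀ X, complementaryMap A X j k = 0) : krausGram A k j = 0 :=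
  ext_iff_trace_mul_right.2 <| by
    simpa only [complementaryMap_apply_eq_trace_krausGram_mul, Matrix.zero_mul, trace_zero] using h

lemma krausMix_mul_mul_conjTranspose [Fintype e] (W : Matrix ι κ R) (A : κ → Matrix d e R)
    (X : Matrix e e R) (i j : ι) :
    krausMix W A i * X * (krausMix W A j)ᴴ =
      ∑ k, ∑ l, (W i k * star (W j l)) • (A k * X * (A l)ᴴ) := by
  simp only [krausMix, conjTranspose_sum, conjTranspose_smul, Matrix.sum_mul, Matrix.mul_sum,
    Matrix.smul_mul, Matrix.mul_smul, Finset.smul_sum, smul_smul]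
  rw [Finset.sum_comm]
  simp only [mul_comm]

lemma krausGram_krausMix_apply [Fintype d] (W : Matrix ι κ R) (A : κ → Matrix d e R) (i j : ι) :
    krausGram (krausMix W A) i j = ∑ k, ∑ l, (star (W i k) * W j l) • krausGram A k l := by
  simp only [krausGram, of_apply, krausMix, conjTranspose_sum, conjTranspose_smul, Matrix.sum_mul,
    Matrix.mul_sum, Matrix.smul_mul, Matrix.mul_smul, Finset.smul_sum, smul_smul]
  rw [Finset.sum_comm]
  simp only [mul_comm]

lemma complementaryMap_krausMix [Fintype d] [Fintype e] (W : Matrix ι κ R) (A : κ → Matrix d e R)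
    (X : Matrix e e R) :
    complementaryMap (krausMix W A) X = W * complementaryMap A X * Wᴴ := by
  ext i j
  simp only [complementaryMap, of_apply, krausMix_mul_mul_conjTranspose, trace_sum, trace_smul,
    mul_apply, conjTranspose_apply, Finset.sum_mul, smul_eq_mul]
  rw [Finset.sum_comm]
  exact Finset.sum_congr rfl fun _ _ => Finset.sum_congr rfl fun _ _ => by ring

lemma sum_sum_sum_star_mul_smul {E : Type*} [AddCommMonoid E] [Module R E] [Fintype ι]
    [DecidableEq κ] {W : Matrix ι κ R} {c : R} (hW : Wᴴ * W = c • 1) (f : κ → κ → E) :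
    ∑ i, ∑ k, ∑ l, (star (W i k) * W i l) • f k l = c • ∑ k, f k k := by
  have h_gram : ∀ k l, ∑ i, star (W i k) * W i l = if k = l then c else 0 := fun k l => by
    simpa [mul_apply, one_apply] using congrFun₂ hW k l
  rw [Finset.sum_comm, Finset.smul_sum]
  refine Finset.sum_congr rfl fun k _ => ?_
  rw [Finset.sum_comm]
  simp only [← Finset.sum_smul, h_gram, ite_smul, zero_smul, Finset.sum_ite_eq, Finset.mem_univ,
    if_true]

lemma krausMap_krausMix [Fintype ι] [DecidableEq κ] [Fintype e] {W : Matrix ι κ R} {c : R}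
    (hW : Wᴴ * W = c • 1) (A : κ → Matrix d e R) (X : Matrix e e R) :
    krausMap (krausMix W A) X = c • krausMap A X := by
  rw [krausMap, krausMap, ← sum_sum_sum_star_mul_smul hW fun k l => A l * X * (A k)ᴴ]
  refine Finset.sum_congr rfl fun i _ => ?_
  rw [krausMix_mul_mul_conjTranspose, Finset.sum_comm]
  simp only [mul_comm]

lemma trace_krausGram_krausMix [Fintype ι] [DecidableEq κ] [Fintype d] {W : Matrix ι κ R} {c : R}
    (hW : Wᴴ * W = c • 1) (A : κ → Matrix d e R) :
    trace (krausGram (krausMix W A)) = c • trace (krausGram A) := by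
  simp only [trace, diag_apply, krausGram_krausMix_apply]
  exact sum_sum_sum_star_mul_smul hW (krausGram A)

end Kraus

section Blocks

variable {R d e ι : Type*} {α β : ι → Type*} [DecidableEq ι] [∀ ℓ, DecidableEq (α ℓ)]

lemma blockDiagonal'_one_kronecker_apply_same [MulZeroOneClass R] (C : ∀ ℓ, Matrix (β ℓ) (β ℓ) R)
    (ℓ : ι) (a : α ℓ) (b b' : β ℓ) :
    (blockDiagonal' fun ℓ => (1 : Matrix (α ℓ) (α ℓ) R) ⊗ₖ C ℓ) ⟨ℓ, a, b⟩ ⟨ℓ, a, b'⟩ =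
      C ℓ b b' := by
  simp only [blockDiagonal'_apply_eq, kronecker_apply, one_apply_eq, one_mul]

lemma blockDiagonal'_one_kronecker_apply_ne [MulZeroOneClass R] (C : ∀ ℓ, Matrix (β ℓ) (β ℓ) R)
    {ℓ ℓ' : ι} {a : α ℓ} {a' : α ℓ'} (h : (⟨ℓ, a⟩ : (ℓ : ι) × α ℓ) ≠ ⟨ℓ', a'⟩) (b : β ℓ)
    (b' : β ℓ') :
    (blockDiagonal' fun ℓ => (1 : Matrix (α ℓ) (α ℓ) R) ⊗ₖ C ℓ) ⟨ℓ, a, b⟩ ⟨ℓ', a', b'⟩ = 0 := by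
  obtain rfl | hℓ := eq_or_ne ℓ ℓ'
  · have ha : a ≠ a' := fun ha => h (by rw [ha])
    rw [blockDiagonal'_apply_eq, kronecker_apply, one_apply_ne ha, zero_mul]
  · exact blockDiagonal'_apply_ne _ _ _ hℓ

variable [CommSemiring R] [StarRing R]

lemma exists_krausGram_eq_blockDiagonal'_one_kronecker [Fintype d] [Fintype e] [DecidableEq e]
    (B : ((ℓ : ι) × (α ℓ × β ℓ)) → Matrix d e R)
    (hB : ∀ X, ∃ Y : ∀ ℓ, Matrix (β ℓ) (β ℓ) R,
      complementaryMap B X = blockDiagonal' fun ℓ => (1 : Matrix (α ℓ) (α ℓ) R) ⊗ₖ Y ℓ) :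
    ∃ C : ∀ ℓ, Matrix (β ℓ) (β ℓ) (Matrix e e R),
      krausGram B = blockDiagonal' fun ℓ => (1 : Matrix (α ℓ) (α ℓ) (Matrix e e R)) ⊗ₖ C ℓ := by
  choose Y hY using hB
  have h_block : ∀ ℓ, ∃ C : Matrix (β ℓ) (β ℓ) (Matrix e e R), ∀ a b b',
      krausGram B ⟨ℓ, a, b⟩ ⟨ℓ, a, b'⟩ = C b b' := by
    intro ℓ
    rcases isEmpty_or_nonempty (α ℓ) with _ | ⟨⟨a₀⟩⟩
    · exact ⟨0, isEmptyElim⟩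
    · exact ⟨of fun b b' => krausGram B ⟨ℓ, a₀, b⟩ ⟨ℓ, a₀, b'⟩, fun a b b' =>
        krausGram_apply_eq_apply fun X => by
          simp only [hY, blockDiagonal'_one_kronecker_apply_same]⟩
  choose C hC using h_block
  refine ⟨C, ?_⟩
  ext1 ⟨ℓ, a, b⟩ ⟨ℓ', a', b'⟩
  by_cases h : (⟨ℓ, a⟩ : (ℓ : ι) × α ℓ) = ⟨ℓ', a'⟩
  · cases h
    rw [hC, blockDiagonal'_one_kronecker_apply_same]
  · rw [blockDiagonal'_one_kronecker_apply_ne _ h]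
    exact krausGram_apply_eq_zero fun X => by
      rw [hY, blockDiagonal'_one_kronecker_apply_ne _ (Ne.symm h)]

/-- The part in block `ℓ` of a vector indexed by triples `(ℓ, a, b)`, as an `α ℓ × β ℓ` matrix. -/
def blockMatrix (w : ((ℓ : ι) × (α ℓ × β ℓ)) → R) (ℓ : ι) : Matrix (α ℓ) (β ℓ) R :=
  of fun a b => w ⟨ℓ, a, b⟩

variable [Fintype ι] [∀ ℓ, Fintype (α ℓ)] [∀ ℓ, Fintype (β ℓ)]

lemma sum_star_mul_smul_blockDiagonal'_one_kronecker {E : Type*} [NonAssocSemiring E] [Module R E]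
    (w : ((ℓ : ι) × (α ℓ × β ℓ)) → R) (C : ∀ ℓ, Matrix (β ℓ) (β ℓ) E) :
    ∑ j, ∑ k, (star (w j) * w k) •
        (blockDiagonal' fun ℓ => (1 : Matrix (α ℓ) (α ℓ) E) ⊗ₖ C ℓ) j k =
      ∑ ℓ, ∑ b, ∑ b', ((blockMatrix w ℓ)ᴴ * blockMatrix w ℓ) b b' • C ℓ b b' := by
  have h_row : ∀ ℓ a b, ∑ k, (star (w ⟨ℓ, a, b⟩) * w k) •
      (blockDiagonal' fun ℓ => (1 : Matrix (α ℓ) (α ℓ) E) ⊗ₖ C ℓ) ⟨ℓ, a, b⟩ k =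
        ∑ b', (star (w ⟨ℓ, a, b⟩) * w ⟨ℓ, a, b'⟩) • C ℓ b b' := by
    intro ℓ a b
    rw [Fintype.sum_sigma, Fintype.sum_eq_single ℓ, Fintype.sum_prod_type,
      Fintype.sum_eq_single a]
    · simp only [blockDiagonal'_one_kronecker_apply_same]
    · intro a' ha'
      refine Finset.sum_eq_zero fun b' _ => ?_
      rw [blockDiagonal'_one_kronecker_apply_ne _ (by simpa using ha'.symm), smul_zero]
    · intro ℓ' hℓ'
      refine Finset.sum_eq_zero fun ab' _ => ?_
      rw [blockDiagonal'_one_kronecker_apply_ne _ fun h => hℓ' (congrArg Sigma.fst h).symm,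
        smul_zero]
  rw [Fintype.sum_sigma]
  refine Finset.sum_congr rfl fun ℓ _ => ?_
  rw [Fintype.sum_prod_type_right]
  refine Finset.sum_congr rfl fun b _ => ?_
  simp only [h_row]
  rw [Finset.sum_comm]
  simp only [← Finset.sum_smul, mul_apply, conjTranspose_apply, blockMatrix, of_apply]

lemma sum_star_mul_smul_blockDiagonal'_one_kronecker_eq_trace [∀ ℓ, DecidableEq (β ℓ)] {E : Type*}
    [NonAssocSemiring E] [Module R E]
    {w : ((ℓ : ι) × (α ℓ × β ℓ)) → R}
    (hw : ∀ ℓ, (blockMatrix w ℓ)ᴴ * blockMatrix w ℓ = (Fintype.card (α ℓ) : R) • 1)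
    (C : ∀ ℓ, Matrix (β ℓ) (β ℓ) E) :
    ∑ j, ∑ k, (star (w j) * w k) •
        (blockDiagonal' fun ℓ => (1 : Matrix (α ℓ) (α ℓ) E) ⊗ₖ C ℓ) j k =
      trace (blockDiagonal' fun ℓ => (1 : Matrix (α ℓ) (α ℓ) E) ⊗ₖ C ℓ) := by
  rw [sum_star_mul_smul_blockDiagonal'_one_kronecker, trace_blockDiagonal']
  refine Finset.sum_congr rfl fun ℓ _ => ?_
  simp [hw, one_apply, trace, Fintype.sum_prod_type, Nat.cast_smul_eq_nsmul, Finset.smul_sum]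

end Blocks

section Hadamard

variable {m n : Type*} [Fintype m] [DecidableEq n]

lemma diagonal_mem_unitaryGroup [Fintype n] {v : n → ℂ} (hv : ∀ i, ‖v i‖ = 1) :
    diagonal v ∈ unitaryGroup n ℂ := by
  rw [mem_unitaryGroup_iff', star_eq_conjTranspose, diagonal_conjTranspose, diagonal_mul_diagonal,
    ← diagonal_one]
  congr! with i
  simp [Complex.conj_mul', hv]

lemma conjTranspose_mul_self_unitary_mul_mul_unitary [DecidableEq m] [Fintype n]
    {P : Matrix m m ℂ} (hP : P ∈ unitaryGroup m ℂ) {Q : Matrix n n ℂ} (hQ : Q ∈ unitaryGroup n ℂ)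
    {M : Matrix m n ℂ} {c : ℂ} (hM : Mᴴ * M = c • 1) : (P * M * Q)ᴴ * (P * M * Q) = c • 1 := by
  rw [mem_unitaryGroup_iff', star_eq_conjTranspose] at hP hQ
  calc (P * M * Q)ᴴ * (P * M * Q) = Qᴴ * (Mᴴ * (Pᴴ * P) * M) * Q := by
        simp only [conjTranspose_mul, Matrix.mul_assoc]
    _ = c • 1 := by
        rw [hP, Matrix.mul_one, hM, Matrix.mul_smul, Matrix.smul_mul, Matrix.mul_one, hQ]

lemma conjTranspose_mul_self_of_addChar {S : Type*} [CommRing S] [Fintype S] {ψ : AddChar S ℂ}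
    (hψ : ψ.IsPrimitive) (x : m ≃ S) (y : n ↪ S) :
    (of fun i j => ψ (x i * y j))ᴴ * (of fun i j => ψ (x i * y j)) = (Fintype.card S : ℂ) • 1 := by
  classical
  ext j k
  calc ∑ i, star (ψ (x i * y j)) * ψ (x i * y k) = ∑ i, ψ (x i * (y k - y j)) :=
        Finset.sum_congr rfl fun i _ => by
          rw [Complex.star_def, ← AddChar.map_neg_eq_conj, ← AddChar.map_add_eq_mul]
          ring_nf
    _ = ∑ s, ψ (s * (y k - y j)) := x.sum_comp fun s => ψ (s * (y k - y j))
    _ = ((Fintype.card S : ℂ) • (1 : Matrix n n ℂ)) j k := by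
        simp [AddChar.sum_mulShift _ hψ, sub_eq_zero, one_apply, eq_comm (a := k)]

lemma exists_norm_eq_one_conjTranspose_mul_self [Fintype n] (h : Fintype.card n ≤ Fintype.card m) :
    ∃ G : Matrix m n ℂ, (∀ i j, ‖G i j‖ = 1) ∧ Gᴴ * G = (Fintype.card m : ℂ) • 1 := by
  rcases isEmpty_or_nonempty m with _ | _
  · have : IsEmpty n := Fintype.card_eq_zero_iff.1 (by simpa using h)
    exact ⟨0, isEmptyElim, Subsingleton.elim _ _⟩
  · have : NeZero (Fintype.card m) := ⟨Fintype.card_ne_zero⟩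
    obtain ⟨x⟩ : Nonempty (m ≃ ZMod (Fintype.card m)) :=
      Fintype.card_eq.1 (ZMod.card _).symm
    obtain ⟨y⟩ : Nonempty (n ↪ ZMod (Fintype.card m)) :=
      Function.Embedding.nonempty_of_card_le (by rwa [ZMod.card])
    refine ⟨of fun i j => ZMod.stdAddChar (x i * y j), fun i j => ?_, ?_⟩
    · rw [of_apply, AddChar.norm_apply]
    · rw [conjTranspose_mul_self_of_addChar (ZMod.isPrimitive_stdAddChar _), ZMod.card]

end Hadamard

section Offsets

variable {ι : Type*} [Fintype ι]

lemma exists_sigma_fin_equiv_fin_offset (c : ι → ℕ) :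
    ∃ (e : ((ℓ : ι) × Fin (c ℓ)) ≃ Fin (∑ ℓ, c ℓ)) (offset : ι → ℕ),
      ∀ ℓ x, (e ⟨ℓ, x⟩ : ℕ) = offset ℓ + x := by
  let k := Fintype.equivFin ι
  let e := (k.symm.sigmaCongrLeft (β := fun ℓ => Fin (c ℓ))).symm.trans
    (finSigmaFinEquiv.trans (finCongr (k.symm.sum_comp c)))
  refine ⟨e, fun ℓ => ∑ i : Fin (k ℓ), c (k.symm (Fin.castLE (k ℓ).2.le i)), fun ℓ x => ?_⟩
  obtain ⟨j, rfl⟩ := k.symm.surjective ℓ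
  have : (k.symm.sigmaCongrLeft (β := fun ℓ => Fin (c ℓ))).symm ⟨k.symm j, x⟩ = ⟨j, x⟩ :=
    (Equiv.symm_apply_eq _).2 rfl
  simp only [e, this, Equiv.trans_apply, finCongr_apply, Fin.val_cast, finSigmaFinEquiv_apply]
  rw [k.apply_symm_apply]

open Fin.CommRing in
lemma zmod_finEquiv_eq_natCast {N : ℕ} [NeZero N] (x : Fin N) :
    ZMod.finEquiv N x = ((x : ℕ) : ZMod N) := by
  rw [← map_natCast (ZMod.finEquiv N), Fin.cast_val_eq_self]

lemma exists_sigma_prod_equiv_zmod_add {α β : ι → Type*} [∀ ℓ, Fintype (α ℓ)] [∀ ℓ, Fintype (β ℓ)]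
    {N : ℕ} [NeZero N] (hN : Fintype.card ((ℓ : ι) × (α ℓ × β ℓ)) = N) :
    ∃ (e : ((ℓ : ι) × (α ℓ × β ℓ)) ≃ ZMod N) (f : ∀ ℓ, α ℓ → ZMod N) (g : ∀ ℓ, β ℓ → ZMod N),
      ∀ ℓ a b, e ⟨ℓ, a, b⟩ = f ℓ a + g ℓ b := by
  obtain rfl : ∑ ℓ, Fintype.card (α ℓ) * Fintype.card (β ℓ) = N := by
    simpa only [Fintype.card_sigma, Fintype.card_prod] using hN
  obtain ⟨e, offset, h_offset⟩ :=
    exists_sigma_fin_equiv_fin_offset fun ℓ => Fintype.card (α ℓ) * Fintype.card (β ℓ)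
  let row ℓ := Fintype.equivFin (α ℓ)
  let col ℓ := Fintype.equivFin (β ℓ)
  let pos ℓ := ((row ℓ).prodCongr (col ℓ)).trans finProdFinEquiv
  have h_pos : ∀ ℓ a b, (pos ℓ (a, b) : ℕ) = col ℓ b + Fintype.card (β ℓ) * row ℓ a :=
    fun _ _ _ => finProdFinEquiv_apply_val _
  refine ⟨((Equiv.sigmaCongrRight pos).trans e).trans (ZMod.finEquiv _).toEquiv,
    fun ℓ a => offset ℓ + Fintype.card (β ℓ) * (row ℓ a : ℕ), fun ℓ b => (col ℓ b : ℕ),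
    fun ℓ a b => ?_⟩
  calc ZMod.finEquiv _ (e ⟨ℓ, pos ℓ (a, b)⟩)
      = ((offset ℓ + (col ℓ b + Fintype.card (β ℓ) * row ℓ a) : ℕ) : ZMod _) := by
        rw [zmod_finEquiv_eq_natCast, h_offset, h_pos]
    _ = offset ℓ + Fintype.card (β ℓ) * (row ℓ a : ℕ) + (col ℓ b : ℕ) := by
        push_cast
        ring

end Offsets

lemma exists_scaled_unitary_blockMatrix_scaled_isometry {ι : Type*} {α β : ι → Type*}
    [Fintype ι] [DecidableEq ι] [∀ ℓ, Fintype (α ℓ)] [∀ ℓ, Fintype (β ℓ)]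
    [∀ ℓ, DecidableEq (α ℓ)] [∀ ℓ, DecidableEq (β ℓ)] [Nonempty ((ℓ : ι) × (α ℓ × β ℓ))]
    (h : ∀ ℓ, Fintype.card (β ℓ) ≤ Fintype.card (α ℓ)) :
    ∃ W : Matrix ((ℓ : ι) × (α ℓ × β ℓ)) ((ℓ : ι) × (α ℓ × β ℓ)) ℂ,
      Wᴴ * W = (Fintype.card ((ℓ : ι) × (α ℓ × β ℓ)) : ℂ) • 1 ∧
      ∀ i ℓ, (blockMatrix (W i) ℓ)ᴴ * blockMatrix (W i) ℓ = (Fintype.card (α ℓ) : ℂ) • 1 := by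
  set N := Fintype.card ((ℓ : ι) × (α ℓ × β ℓ))
  have : NeZero N := ⟨Fintype.card_ne_zero⟩
  obtain ⟨e, f, g, h_add⟩ := exists_sigma_prod_equiv_zmod_add (α := α) (β := β) (N := N) rfl
  choose G hG_norm hG using fun ℓ => exists_norm_eq_one_conjTranspose_mul_self (h ℓ)
  let ψ : AddChar (ZMod N) ℂ := ZMod.stdAddChar
  let F : Matrix ((ℓ : ι) × (α ℓ × β ℓ)) ((ℓ : ι) × (α ℓ × β ℓ)) ℂ := of fun i j => ψ (e i * e j)
  have hF : Fᴴ * F = (N : ℂ) • 1 := by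
    simpa [ZMod.card] using
      conjTranspose_mul_self_of_addChar (ZMod.isPrimitive_stdAddChar N) e e.toEmbedding
  let D := diagonal fun j : (ℓ : ι) × (α ℓ × β ℓ) => G j.1 j.2.1 j.2.2
  have hD : D ∈ unitaryGroup _ ℂ := diagonal_mem_unitaryGroup fun j => hG_norm _ _ _
  refine ⟨F * D, ?_, fun i ℓ => ?_⟩
  · simpa using conjTranspose_mul_self_unitary_mul_mul_unitary (one_mem _) hD hF
  · have h_factor : blockMatrix ((F * D) i) ℓ =
        diagonal (fun a => ψ (e i * f ℓ a)) * G ℓ * diagonal (fun b => ψ (e i * g ℓ b)) := by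
      ext a b
      simp only [blockMatrix, of_apply, D, F, mul_diagonal, diagonal_mul, h_add, mul_add,
        AddChar.map_add_eq_mul]
      ring
    rw [h_factor]
    exact conjTranspose_mul_self_unitary_mul_mul_unitary
      (diagonal_mem_unitaryGroup fun _ => AddChar.norm_apply _ _)
      (diagonal_mem_unitaryGroup fun _ => AddChar.norm_apply _ _) (hG ℓ)

theorem stmt_3_general {ι κ n : Type*} {α β : ι → Type*} [Fintype ι] [DecidableEq ι]
    [∀ ℓ, Fintype (α ℓ)] [∀ ℓ, Fintype (β ℓ)] [∀ ℓ, DecidableEq (α ℓ)]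
    [Nonempty ((ℓ : ι) × (α ℓ × β ℓ))]
    [Fintype κ] [DecidableEq κ] [Fintype n] [DecidableEq n]
    (hcard : ∀ ℓ, Fintype.card (β ℓ) ≤ Fintype.card (α ℓ))
    (A : κ → Matrix n n ℂ) (hA : ∑ k, (A k)ᴴ * A k = 1)
    (V : Matrix ((ℓ : ι) × (α ℓ × β ℓ)) κ ℂ) (hV : Vᴴ * V = 1)
    (hblock : ∀ X, ∃ Y : ∀ ℓ, Matrix (β ℓ) (β ℓ) ℂ,
      V * complementaryMap A X * Vᴴ =
        blockDiagonal' fun ℓ => (1 : Matrix (α ℓ) (α ℓ) ℂ) ⊗ₖ Y ℓ) :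
    ∃ U : ((ℓ : ι) × (α ℓ × β ℓ)) → unitaryGroup n ℂ, ∀ X, krausMap A X =
      ∑ i, (Fintype.card ((ℓ : ι) × (α ℓ × β ℓ)) : ℂ)⁻¹ •
        ((U i : Matrix n n ℂ) * X * (U i : Matrix n n ℂ)ᴴ) := by
  classical
  obtain ⟨C, hC⟩ := exists_krausGram_eq_blockDiagonal'_one_kronecker (krausMix V A)
    fun X => by simpa only [complementaryMap_krausMix] using hblock X
  obtain ⟨W, hW, hW_block⟩ := exists_scaled_unitary_blockMatrix_scaled_isometry hcard
  have hV' : Vᴴ * V = (1 : ℂ) • 1 := by rw [hV, one_smul]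
  have h_unitary : ∀ i, krausMix W (krausMix V A) i ∈ unitaryGroup n ℂ := fun i => by
    rw [mem_unitaryGroup_iff', star_eq_conjTranspose]
    calc (krausMix W (krausMix V A) i)ᴴ * krausMix W (krausMix V A) i
        = ∑ j, ∑ k, (star (W i j) * W i k) • krausGram (krausMix V A) j k :=
          krausGram_krausMix_apply ..
      _ = trace (krausGram (krausMix V A)) := by
          rw [hC, sum_star_mul_smul_blockDiagonal'_one_kronecker_eq_trace (hW_block i)]
      _ = ∑ k, (A k)ᴴ * A k := by rw [trace_krausGram_krausMix hV', one_smul]; rfl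
      _ = 1 := hA
  refine ⟨fun i => ⟨_, h_unitary i⟩, fun X => ?_⟩
  have h_map := krausMap_krausMix hW (krausMix V A) X
  rw [krausMap_krausMix hV', one_smul] at h_map
  rw [← Finset.smul_sum, eq_inv_smul_iff₀ (Nat.cast_ne_zero.2 Fintype.card_ne_zero)]
  exact h_map.symm

lemma blockDiagonal'_one_kronecker_fin_apply {R : Type*} [MulZeroOneClass R] {p : ℕ}
    {m d : Fin p → ℕ} (Y : ∀ ℓ, Matrix (Fin (d ℓ)) (Fin (d ℓ)) R)
    (i i' : (ℓ : Fin p) × (Fin (m ℓ) × Fin (d ℓ))) :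
    (blockDiagonal' fun ℓ => (1 : Matrix (Fin (m ℓ)) (Fin (m ℓ)) R) ⊗ₖ Y ℓ) i i' =
      if h : i.1 = i'.1 then
        (if Fin.cast (congrArg m h) i.2.1 = i'.2.1 then
          Y i'.1 (Fin.cast (congrArg d h) i.2.2) i'.2.2
        else 0)
      else 0 := by
  obtain ⟨ℓ, a, b⟩ := i
  obtain ⟨ℓ', a', b'⟩ := i'
  obtain rfl | h := eq_or_ne ℓ ℓ'
  · simp [one_apply]
  · simp [h, blockDiagonal'_apply_ne]

/-- If the image of the canonical complementary channel `X ↦ VΨ(X)Vᴴ`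
(`V` an isometry into `M_N` with `N = m₁n₁ + ⋯ + m_pn_p`, indexed by triples
`(ℓ,a,b)`) lies in the von Neumann algebra
`(1_{m₁} ⊗ M_{n₁}) ⊕ ⋯ ⊕ (1_{m_p} ⊗ M_{n_p})` with `m_ℓ ≥ n_ℓ`, then `Φ` is
mixed unitary with mixed-unitary rank at most `N`. -/
theorem stmt_3 (n r p : ℕ) (hn : 0 < n) (hr : 0 < r) (hp : 0 < p)
    (m nn : Fin p → ℕ) (hm : ∀ ℓ, 0 < m ℓ) (hnn : ∀ ℓ, 0 < nn ℓ)
    (hmn : ∀ ℓ, nn ℓ ≤ m ℓ)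
    (A : Fin r → Matrix (Fin n) (Fin n) ℂ)
    (hli : LinearIndependent ℂ A)
    (hsum : ∑ k, (A k)ᴴ * A k = 1)
    (Φ : Matrix (Fin n) (Fin n) ℂ → Matrix (Fin n) (Fin n) ℂ)
    (hΦ : ∀ X, Φ X = ∑ k, A k * X * (A k)ᴴ)
    (Ψ : Matrix (Fin n) (Fin n) ℂ → Matrix (Fin r) (Fin r) ℂ)
    (hΨ : ∀ X j k, Ψ X j k = Matrix.trace (A j * X * (A k)ᴴ))
    (V : Matrix ((ℓ : Fin p) × (Fin (m ℓ) × Fin (nn ℓ))) (Fin r) ℂ)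
    (hV : Vᴴ * V = 1)
    (hblock : ∀ X : Matrix (Fin n) (Fin n) ℂ,
      ∃ Y : (ℓ : Fin p) → Matrix (Fin (nn ℓ)) (Fin (nn ℓ)) ℂ,
        ∀ i i' : (ℓ : Fin p) × (Fin (m ℓ) × Fin (nn ℓ)),
          (V * Ψ X * Vᴴ) i i' =
            if h : i.1 = i'.1 then
              (if Fin.cast (congrArg m h) i.2.1 = i'.2.1 then
                Y i'.1 (Fin.cast (congrArg nn h) i.2.2) i'.2.2
              else 0)
            else 0) :
    ∃ (U : ((ℓ : Fin p) × (Fin (m ℓ) × Fin (nn ℓ))) → Matrix (Fin n) (Fin n) ℂ)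
      (q : ((ℓ : Fin p) × (Fin (m ℓ) × Fin (nn ℓ))) → ℝ),
        (∀ i, (U i)ᴴ * U i = 1 ∧ U i * (U i)ᴴ = 1) ∧
        (∀ i, 0 ≤ q i) ∧ (∑ i, q i = 1) ∧
        (∀ X, Φ X = ∑ i, (q i : ℂ) • (U i * X * (U i)ᴴ)) := by
  have : Nonempty ((ℓ : Fin p) × (Fin (m ℓ) × Fin (nn ℓ))) :=
    ⟨⟨⟨0, hp⟩, ⟨0, hm _⟩, ⟨0, hnn _⟩⟩⟩
  obtain rfl : Ψ = complementaryMap A := funext fun X => Matrix.ext (hΨ X)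
  obtain ⟨U, hU⟩ := stmt_3_general (by simpa using hmn) A hsum V hV fun X =>
    (hblock X).imp fun Y hY => Matrix.ext fun i i' =>
      (hY i i').trans (blockDiagonal'_one_kronecker_fin_apply Y i i').symm
  refine ⟨fun i => U i, fun _ => (Fintype.card ((ℓ : Fin p) × (Fin (m ℓ) × Fin (nn ℓ))) : ℝ)⁻¹,
    fun i => Unitary.mem_iff.1 (U i).2, fun _ => by positivity, ?_, fun X => ?_⟩
  · rw [Finset.sum_const, Finset.card_univ, nsmul_eq_mul,
      mul_inv_cancel₀ (Nat.cast_ne_zero.2 Fintype.card_ne_zero)]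
  · simpa only [hΦ, krausMap, Complex.ofReal_inv, Complex.ofReal_natCast] using hU X
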